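/- (Birman's conjecture for n = 3.) The Birman homomorphism η : SB_3 → ℤB_3 is injective. -/

import Mathlib

/-!
Every singular braid on 3 strands can be written `(g₁ τ₁ g₁⁻¹) ⋯ (gₙ τ₁ gₙ⁻¹) k` with `gᵢ`, `k` in
`B3` (`exists_singWord`), and `η` sends it to `s(g₁) ⋯ s(gₙ) k`, where
`s(g) = g (σ₁ - σ₁⁻¹) g⁻¹ = (c - 1) g σ₁⁻¹ g⁻¹` with `c = g σ₁² g⁻¹`. The factors can be recovered
one after the other from this product, because of a dichotomy governed by the action of `B3` on
`ℤ²` through `SL₂(ℤ)`, with `e = (1, 0)`.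

* If `g e = ± h e`, then `g τ₁ g⁻¹ = h τ₁ h⁻¹` in `SB3`
  (`SlopePair.smul_eq_of_snd_eq_zero`). Indeed the Euclidean algorithm defines a map from `ℤ²` to
  `SB3` that sends `e` to `τ₁`, is invariant under `x ↦ -x`, and is equivariant for the
  conjugation action of `B3`; the defining relations of `SB3` are what its equivariance needs.
* If `g e ≠ ± h e`, then `g σ₁² g⁻¹` and `h σ₁² h⁻¹` act on `ℤ²` as squares of transvections along
  independent vectors, hence freely generate a free group by ping-pong (`free_pair`). For free
  generators `c`, `d` of a subgroup of a group `G`, the right ideals `(c - 1) ℤG` and `(d - 1) ℤG`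
  intersect trivially, since a finitely supported flow on a tree vanishes (`group_kill`). So
  `s(g) u = s(h) v` forces `u = 0` (`skein_kill`); in particular `s(g)` is not a left zero divisor.

Given two words with the same image, the first factors are therefore equal and can be cancelled.
Augmentation shows that a nonempty word never has the image of an empty one, and for empty words
the embedding of `B3` in its group ring concludes.
-/

/-- Generators of the singular braid monoid on 3 strands. -/
inductive SB3Gen : Type
  | s1 | s2 | sb1 | sb2 | t1 | t2

open FreeMonoid in
/-- Defining relations of the singular braid monoid on 3 strands. -/
inductive SB3Rel : FreeMonoid SB3Gen → FreeMonoid SB3Gen → Prop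
  | inv_s1 : SB3Rel (of .s1 * of .sb1) 1
  | inv_s1' : SB3Rel (of .sb1 * of .s1) 1
  | inv_s2 : SB3Rel (of .s2 * of .sb2) 1
  | inv_s2' : SB3Rel (of .sb2 * of .s2) 1
  | braid : SB3Rel (of .s1 * of .s2 * of .s1) (of .s2 * of .s1 * of .s2)
  | tau_s : SB3Rel (of .t2 * of .s1 * of .s2) (of .s1 * of .s2 * of .t1)
  | s_tau : SB3Rel (of .s2 * of .s1 * of .t2) (of .t1 * of .s2 * of .s1)
  | comm1 : SB3Rel (of .s1 * of .t1) (of .t1 * of .s1)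
  | comm2 : SB3Rel (of .s2 * of .t2) (of .t2 * of .s2)

/-- The singular braid monoid on 3 strands. -/
abbrev SB3 : Type := PresentedMonoid SB3Rel

/-- The generators of `SB3` as elements. -/
abbrev SB3.g (x : SB3Gen) : SB3 := PresentedMonoid.of SB3Rel x

noncomputable section

open LaurentPolynomial Polynomial

/-- `R = ℤ[t,t⁻¹][y]`. -/
abbrev RR : Type := Polynomial (LaurentPolynomial ℤ)

/-- The element `t` of `R`. -/
abbrev Rt : RR := Polynomial.C (LaurentPolynomial.T 1)
/-- The element `t⁻¹` of `R`. -/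
abbrev Rtinv : RR := Polynomial.C (LaurentPolynomial.T (-1))
/-- The element `y` of `R`. -/
abbrev Ry : RR := Polynomial.X

/-- The defining property of the singular Burau representation. -/
def IsSingularBurau (φ : SB3 →* Matrix (Fin 2) (Fin 2) RR) : Prop :=
  φ (SB3.g .s1) = !![-Rt, 1; 0, 1] ∧
  φ (SB3.g .s2) = !![1, 0; Rt, -Rt] ∧
  φ (SB3.g .t1) = !![1 - Ry - Rt * Ry, Ry; 0, 1] ∧
  φ (SB3.g .sb1) = !![-Rtinv, Rtinv; 0, 1] ∧
  φ (SB3.g .sb2) = !![1, 0; 1, -Rtinv] ∧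
  φ (SB3.g .t2) =
    !![-Rt, 1; 0, 1] * !![1, 0; Rt, -Rt] * !![1 - Ry - Rt * Ry, Ry; 0, 1] *
      !![1, 0; 1, -Rtinv] * !![-Rtinv, Rtinv; 0, 1]

end
/-- The defining relator of the braid group on 3 strands. -/
def braidRels3 : Set (FreeGroup (Fin 2)) :=
  {FreeGroup.of 0 * FreeGroup.of 1 * FreeGroup.of 0 *
    (FreeGroup.of 1 * FreeGroup.of 0 * FreeGroup.of 1)⁻¹}

/-- The braid group on 3 strands. -/
abbrev B3 : Type := PresentedGroup braidRels3

/-- The generator `σ₁` of `B3`. -/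
abbrev B3.sig1 : B3 := PresentedGroup.of 0
/-- The generator `σ₂` of `B3`. -/
abbrev B3.sig2 : B3 := PresentedGroup.of 1

/-- The defining property of the Birman homomorphism `η : SB3 → ℤB3`. -/
def IsBirman (η : SB3 →* MonoidAlgebra ℤ B3) : Prop :=
  η (SB3.g .s1) = MonoidAlgebra.of ℤ B3 B3.sig1 ∧
  η (SB3.g .s2) = MonoidAlgebra.of ℤ B3 B3.sig2 ∧
  η (SB3.g .sb1) = MonoidAlgebra.of ℤ B3 B3.sig1⁻¹ ∧
  η (SB3.g .sb2) = MonoidAlgebra.of ℤ B3 B3.sig2⁻¹ ∧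
  η (SB3.g .t1) = MonoidAlgebra.of ℤ B3 B3.sig1 - MonoidAlgebra.of ℤ B3 B3.sig1⁻¹ ∧
  η (SB3.g .t2) = MonoidAlgebra.of ℤ B3 B3.sig2 - MonoidAlgebra.of ℤ B3 B3.sig2⁻¹

/-! ### Two free generators give independent right ideals in the group ring -/

open scoped Pointwise

/-- A potential on the Cayley tree of the free group on two generators `a`, `b` that increases by
one along the single edge `1 → a` and is constant along every other edge. It is read off from an
action of the free group on `ℤ × FreeGroup (Fin 2)` in which the first coordinate keeps count. -/
theorem exists_potential : ∃ φ : FreeGroup (Fin 2) → ℤ,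
    (∀ w, φ (FreeGroup.of 0 * w) = φ w + if w = 1 then 1 else 0) ∧
    (∀ w, φ (FreeGroup.of 1 * w) = φ w) := by
  classical
  let P : Equiv.Perm (ℤ × FreeGroup (Fin 2)) :=
    { toFun := fun x => (x.1 + if x.2 = 1 then 1 else 0, FreeGroup.of 0 * x.2)
      invFun := fun x => (x.1 - if (FreeGroup.of 0)⁻¹ * x.2 = 1 then 1 else 0,
        (FreeGroup.of 0)⁻¹ * x.2)
      left_inv := fun x => by simp
      right_inv := fun x => by simp }
  let Q : Equiv.Perm (ℤ × FreeGroup (Fin 2)) :=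
    { toFun := fun x => (x.1, FreeGroup.of 1 * x.2)
      invFun := fun x => (x.1, (FreeGroup.of 1)⁻¹ * x.2)
      left_inv := fun x => by simp
      right_inv := fun x => by simp }
  let Θ : FreeGroup (Fin 2) →* Equiv.Perm (ℤ × FreeGroup (Fin 2)) := FreeGroup.lift ![P, Q]
  have hP : Θ (FreeGroup.of 0) = P := by simp [Θ]
  have hQ : Θ (FreeGroup.of 1) = Q := by simp [Θ]
  have h2 : ∀ w v : FreeGroup (Fin 2), ∀ n : ℤ, (Θ w (n, v)).2 = w * v := by
    intro w
    induction w using FreeGroup.induction_on with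
    | C1 => simp
    | of i =>
      intro v n
      fin_cases i
      · exact congrArg (fun T : Equiv.Perm _ => (T (n, v)).2) hP
      · exact congrArg (fun T : Equiv.Perm _ => (T (n, v)).2) hQ
    | inv_of i _ =>
      intro v n
      rw [map_inv]
      fin_cases i
      · exact congrArg (fun T : Equiv.Perm _ => (T⁻¹ (n, v)).2) hP
      · exact congrArg (fun T : Equiv.Perm _ => (T⁻¹ (n, v)).2) hQ
    | mul x y hx hy =>
      intro v n
      rw [map_mul, Equiv.Perm.mul_apply, ← Prod.mk.eta (p := Θ y (n, v)), hx, hy, mul_assoc]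
  refine ⟨fun w => (Θ w (0, 1)).1, fun w => ?_, fun w => ?_⟩
  · have hw := h2 w 1 0
    rw [mul_one] at hw
    simp only [map_mul, Equiv.Perm.mul_apply, hP]
    change _ + (if (Θ w (0, 1)).2 = 1 then (1 : ℤ) else 0) = _
    rw [hw]
  · simp only [map_mul, Equiv.Perm.mul_apply, hQ]
    rfl

/-- `u` and `-v` are the values of a finitely supported flow on the edges of the Cayley tree, and
the hypothesis is conservation at each vertex. Pairing with the potential of `exists_potential`
extracts the value of the flow on the edge `1 → a`. -/
theorem freeGroup_kill (u v : FreeGroup (Fin 2) →₀ ℤ)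
    (h : ∀ w, u ((FreeGroup.of 0)⁻¹ * w) - u w = v ((FreeGroup.of 1)⁻¹ * w) - v w) :
    u 1 = 0 := by
  classical
  obtain ⟨φ, h0, h1⟩ := exists_potential
  have shift : ∀ (x : FreeGroup (Fin 2)) (f : FreeGroup (Fin 2) →₀ ℤ),
      (∑ᶠ w, φ w * (f (x⁻¹ * w) - f w)) = ∑ᶠ w, (φ (x * w) - φ w) * f w := by
    intro x f
    have hf : (Function.support f).Finite := f.hasFiniteSupport
    have hf' : (Function.support fun w => f (x⁻¹ * w)).Finite :=
      hf.preimage (f := fun w => x⁻¹ * w) (mul_right_injective _).injOn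
    simp only [mul_sub, sub_mul]
    rw [finsum_sub_distrib, finsum_sub_distrib]
    · congr 1
      rw [← finsum_comp_equiv (Equiv.mulLeft x)]
      simp
    · exact hf.subset (Function.support_mul_subset_right _ _)
    · exact hf.subset (Function.support_mul_subset_right _ _)
    · exact hf'.subset (Function.support_mul_subset_right _ _)
    · exact hf.subset (Function.support_mul_subset_right _ _)
  have key := shift (FreeGroup.of 0) u
  simp only [h] at key
  rw [shift (FreeGroup.of 1) v] at key
  simp only [h0, h1, sub_self, zero_mul, finsum_zero, add_sub_cancel_left] at key
  rw [finsum_eq_single _ 1 (by intro x hx; simp [hx])] at key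
  simpa using key.symm


/-- If `c`, `d` are free generators of a free subgroup, then `(c - 1) ℤG` and `(d - 1) ℤG` intersect
trivially and `c - 1` is not a left zero divisor: restrict the coefficients to a coset of the
subgroup and use `freeGroup_kill`. -/
theorem group_kill {G : Type*} [Group G] (c d : G)
    (hinj : Function.Injective (FreeGroup.lift ![c, d])) (u v : MonoidAlgebra ℤ G)
    (h : (MonoidAlgebra.of ℤ G c - 1) * u = (MonoidAlgebra.of ℤ G d - 1) * v) : u = 0 := by
  ext g
  have hcoe : ∀ x, u.coeff (c⁻¹ * x) - u.coeff x = v.coeff (d⁻¹ * x) - v.coeff x := by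
    intro x
    have := congrArg (fun y => y.coeff x) h
    simpa [sub_mul] using this
  have hinj' : Function.Injective fun w => FreeGroup.lift ![c, d] w * g :=
    (mul_left_injective g).comp hinj
  have := freeGroup_kill (u.coeff.comapDomain _ hinj'.injOn) (v.coeff.comapDomain _ hinj'.injOn)
    (fun w => by simpa [mul_assoc] using hcoe (FreeGroup.lift ![c, d] w * g))
  simpa using this

/-! ### The action of `B3` on `ℤ²` -/

/-- The transvection by which `σ₁` acts on `ℤ²`. -/
def shear1 : (ℤ × ℤ) ≃ₗ[ℤ] (ℤ × ℤ) where
  toFun x := (x.1 + x.2, x.2)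
  invFun x := (x.1 - x.2, x.2)
  left_inv x := by ext <;> simp
  right_inv x := by ext <;> simp
  map_add' x y := by ext <;> simp; ring
  map_smul' c x := by ext <;> simp; ring

/-- The transvection by which `σ₂` acts on `ℤ²`. -/
def shear2 : (ℤ × ℤ) ≃ₗ[ℤ] (ℤ × ℤ) where
  toFun x := (x.1, x.2 - x.1)
  invFun x := (x.1, x.2 + x.1)
  left_inv x := by ext <;> simp
  right_inv x := by ext <;> simp
  map_add' x y := by ext <;> simp; ring
  map_smul' c x := by ext <;> simp; ring

/-- The representation `B3 → SL₂(ℤ)`, as an action on `ℤ × ℤ` (the reduced Burau representation at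
`t = -1`). -/
def rho : B3 →* (ℤ × ℤ) ≃ₗ[ℤ] (ℤ × ℤ) :=
  PresentedGroup.toGroup (rels := braidRels3) (f := ![shear1, shear2]) (by
    rintro r rfl
    rw [map_mul, map_inv, mul_inv_eq_one]
    apply LinearEquiv.ext
    intro x
    ext <;> simp [shear1, shear2])

theorem rho_sig1 (x : ℤ × ℤ) : rho B3.sig1 x = (x.1 + x.2, x.2) := by
  have : rho B3.sig1 = shear1 := by simp [rho]
  rw [this]; rfl

theorem rho_sig2 (x : ℤ × ℤ) : rho B3.sig2 x = (x.1, x.2 - x.1) := by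
  have : rho B3.sig2 = shear2 := by simp [rho]
  rw [this]; rfl

theorem rho_mul (g h : B3) (x : ℤ × ℤ) : rho (g * h) x = rho g (rho h x) := by
  rw [map_mul]; rfl

theorem rho_inv_self (g : B3) (x : ℤ × ℤ) : rho g⁻¹ (rho g x) = x := by
  rw [← rho_mul, inv_mul_cancel, map_one]; rfl

theorem rho_self_inv (g : B3) (x : ℤ × ℤ) : rho g (rho g⁻¹ x) = x := by
  rw [← rho_mul, mul_inv_cancel, map_one]; rfl

theorem rho_ne_zero (g : B3) {x : ℤ × ℤ} (hx : x ≠ 0) : rho g x ≠ 0 := by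
  simpa using hx

theorem B3_induction (p : B3 → Prop) (h1 : p B3.sig1) (h2 : p B3.sig2) (hone : p 1)
    (hmul : ∀ g h, p g → p h → p (g * h)) (hinv : ∀ g, p g → p g⁻¹) (g : B3) : p g := by
  let H : Subgroup B3 :=
    { carrier := {g | p g}
      mul_mem' := fun {a b} ha hb => hmul a b ha hb
      one_mem' := hone
      inv_mem' := fun {a} ha => hinv a ha }
  exact PresentedGroup.generated_by braidRels3 H (fun j => by fin_cases j; exacts [h1, h2]) g

/-- The standard symplectic form on `ℤ²`, preserved by `rho`. -/
def area (x y : ℤ × ℤ) : ℤ := x.1 * y.2 - x.2 * y.1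

theorem area_rho (g : B3) : ∀ x y, area (rho g x) (rho g y) = area x y := by
  induction g using B3_induction with
  | h1 => intro x y; simp only [rho_sig1, area]; ring
  | h2 => intro x y; simp only [rho_sig2, area]; ring
  | hone => intro x y; rw [map_one]; rfl
  | hmul g h hg hh => intro x y; rw [rho_mul, rho_mul, hg, hh]
  | hinv g hg => intro x y; rw [← hg, rho_self_inv, rho_self_inv]

/-- Conjugates of `σ₁²` act as squares of transvections along primitive vectors. -/
theorem rho_conj_sq (g : B3) (x : ℤ × ℤ) :
    rho (g * (B3.sig1 * B3.sig1) * g⁻¹) x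
      = x + (2 * area (rho g (1, 0)) x) • rho g (1, 0) := by
  have hT : ∀ y : ℤ × ℤ, rho (B3.sig1 * B3.sig1) y = y + (2 * area (1, 0) y) • (1, 0) := by
    intro y
    rw [rho_mul, rho_sig1, rho_sig1]
    ext <;> simp [area]; ring
  rw [rho_mul, rho_mul, hT, map_add, map_zsmul, rho_self_inv]
  congr 3
  rw [← area_rho g, rho_self_inv]

/-- A primitive vector with zero second coordinate is `±(1, 0)`. -/
theorem rho_e1_eq_of_area (g : B3) (h : (rho g (1, 0)).2 = 0) :
    rho g (1, 0) = (1, 0) ∨ rho g (1, 0) = (-1, 0) := by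
  have := area_rho g (1, 0) (0, 1)
  simp only [area, h] at this
  have h1 : (rho g (1, 0)).1 = 1 ∨ (rho g (1, 0)).1 = -1 := by
    apply Int.eq_one_or_neg_one_of_mul_eq_one (v := (rho g (0, 1)).2)
    simpa using this
  rcases h1 with h1 | h1
  · left; ext <;> simp [h, h1]
  · right; ext <;> simp [h, h1]

/-- `σ₁²` and `h σ₁² h⁻¹` freely generate a free group unless `h` fixes the line through `(1, 0)`.
This is the ping-pong lemma on nonzero integer vectors. -/
theorem free_pair (h : B3) (hh : (rho h (1, 0)).2 ≠ 0) :
    Function.Injective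
      (FreeGroup.lift ![B3.sig1 * B3.sig1, h * (B3.sig1 * B3.sig1) * h⁻¹]) := by
  -- The sign of the transvection vector is irrelevant, so it can be chosen with `0 < w.2`.
  obtain ⟨w, hm, hd⟩ : ∃ w : ℤ × ℤ, 0 < w.2 ∧
      ∀ x, rho (h * (B3.sig1 * B3.sig1) * h⁻¹) x = x + (2 * area w x) • w := by
    rcases lt_or_gt_of_ne hh with hlt | hgt
    · refine ⟨-rho h (1, 0), by simpa using hlt, fun x => ?_⟩
      rw [rho_conj_sq]
      ext <;> simp [area] <;> ring
    · exact ⟨_, hgt, fun x => rho_conj_sq h x⟩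
  let α := {x : ℤ × ℤ // x ≠ 0}
  let act : MulAction B3 α :=
    { smul := fun g x => ⟨rho g x.1, rho_ne_zero g x.2⟩
      one_smul := fun x => Subtype.ext (by change rho 1 x.1 = x.1; rw [map_one]; rfl)
      mul_smul := fun g h x => Subtype.ext (rho_mul g h x.1) }
  have coe_smul : ∀ (g : B3) (x : α), (g • x).1 = rho g x.1 := fun _ _ => rfl
  -- In the coordinates `A = area x w`, `B = x.2` the two generators act on the slope `A / B` as
  -- `s ↦ s + 2 * w.2` and `-1 / s ↦ -1 / s + 2 * w.2`; the sets below are the slope intervals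
  -- `[1, ∞]`, `[-1, 0]` (for `X`) and `(-∞, -1)`, `(0, 1)` (for `Y`).
  let X0 : ℤ → ℤ → Prop := fun A B => (0 ≤ B ∧ B ≤ A) ∨ (B ≤ 0 ∧ A ≤ B)
  let X1 : ℤ → ℤ → Prop := fun A B => (0 < B ∧ -B ≤ A ∧ A ≤ 0) ∨ (B < 0 ∧ 0 ≤ A ∧ A ≤ -B)
  let Y0 : ℤ → ℤ → Prop := fun A B => (0 < B ∧ A < -B) ∨ (B < 0 ∧ -B < A)
  let Y1 : ℤ → ℤ → Prop := fun A B => (0 < A ∧ A < B) ∨ (B < A ∧ A < 0)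
  let X : Fin 2 → Set α := fun i => {x | ![X0, X1] i (area x.1 w) x.1.2}
  let Y : Fin 2 → Set α := fun i => {x | ![Y0, Y1] i (area x.1 w) x.1.2}
  have nz : ∀ x : α, area x.1 w ≠ 0 ∨ x.1.2 ≠ 0 := by
    rintro ⟨⟨p, q⟩, hx⟩
    by_contra! hcon
    obtain ⟨hA, hB⟩ := hcon
    simp only at hB
    subst hB
    simp [area, hm.ne'] at hA
    exact hx (by ext <;> simp [hA])
  have growth : ∀ n : ℤ, (0 < n → n ≤ n * w.2) ∧ (n < 0 → n * w.2 ≤ n) ∧ (n = 0 → n * w.2 = 0) :=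
    fun n => ⟨fun hn => by nlinarith, fun hn => by nlinarith, fun hn => by simp [hn]⟩
  have hX : ∀ i, ![B3.sig1 * B3.sig1, h * (B3.sig1 * B3.sig1) * h⁻¹] i • (Y i)ᶜ ⊆ X i := by
    intro i
    rintro _ ⟨x, hx, rfl⟩
    have hxn := nz x
    fin_cases i
    · have e : rho (B3.sig1 * B3.sig1) x.1 = (x.1.1 + 2 * x.1.2, x.1.2) := by
        rw [rho_mul, rho_sig1, rho_sig1]; ext <;> simp; ring
      have eA : area (x.1.1 + 2 * x.1.2, x.1.2) w = area x.1 w + 2 * (x.1.2 * w.2) := by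
        simp only [area]; ring
      change ¬ Y0 (area x.1 w) x.1.2 at hx
      change X0 (area (rho (B3.sig1 * B3.sig1) x.1) w) (rho (B3.sig1 * B3.sig1) x.1).2
      rw [e, eA]
      simp only [X0, Y0] at hx ⊢
      have := growth x.1.2
      omega
    · have eB : (rho (h * (B3.sig1 * B3.sig1) * h⁻¹) x.1).2
          = x.1.2 - 2 * (area x.1 w * w.2) := by
        rw [hd]; simp [area]; ring
      have eA : area (rho (h * (B3.sig1 * B3.sig1) * h⁻¹) x.1) w = area x.1 w := by
        rw [hd]; simp [area]; ring
      change ¬ Y1 (area x.1 w) x.1.2 at hx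
      change X1 (area (rho (h * (B3.sig1 * B3.sig1) * h⁻¹) x.1) w)
        (rho (h * (B3.sig1 * B3.sig1) * h⁻¹) x.1).2
      rw [eA, eB]
      simp only [X1, Y1] at hx ⊢
      have := growth (area x.1 w)
      omega
  refine FreeGroup.injective_lift_of_ping_pong _ X Y ?_ ?_ ?_ ?_ hX ?_
  · intro i
    fin_cases i
    · exact ⟨⟨(1, 0), by simp⟩, Or.inl ⟨le_rfl, by simpa [area] using hm.le⟩⟩
    · exact ⟨⟨w, fun h0 => by simp [h0] at hm⟩,
        Or.inl ⟨hm, by simp [area]; constructor <;> nlinarith⟩⟩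
  · intro i j hij
    refine Set.disjoint_left.2 fun x h1 h2 => ?_
    have := nz x
    fin_cases i <;> fin_cases j <;> simp [X, X0, X1] at hij h1 h2 <;> omega
  · intro i j hij
    refine Set.disjoint_left.2 fun x h1 h2 => ?_
    fin_cases i <;> fin_cases j <;> simp [Y, Y0, Y1] at hij h1 h2 <;> omega
  · intro i j
    refine Set.disjoint_left.2 fun x h1 h2 => ?_
    fin_cases i <;> fin_cases j <;> simp [X, X0, X1, Y, Y0, Y1] at h1 h2 <;> omega
  · -- `a (Yᶜ) ⊆ X` and `a⁻¹ (Xᶜ) ⊆ Y` are equivalent.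
    intro i
    rintro _ ⟨x, hx, rfl⟩
    by_contra hcon
    apply hx
    have := hX i ⟨_, hcon, rfl⟩
    simpa using this


/-! ### Orbit maps defined by the Euclidean algorithm -/

/-- The element of `S` obtained by running the subtractive Euclidean algorithm on `(p, q)`: a step
`(p, q) → (p - q, q)` contributes `a`, a step `(p, q) → (p, q - p)` contributes `b`, and the
terminal pairs `(p, 0)`, `(0, q)` give `s`, `t`. -/
def euclid {S : Type*} (a b : S → S) (s t : S) : ℕ → ℕ → S
  | _, 0 => s
  | 0, _ + 1 => t
  | p + 1, q + 1 =>
    if q ≤ p then a (euclid a b s t (p - q) (q + 1)) else b (euclid a b s t (p + 1) (q - p))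
  termination_by p q => p + q

section Euclid

variable {S : Type*} {a b : S → S} {s t : S}

theorem euclid_zero_right (p : ℕ) : euclid a b s t p 0 = s := by
  simp [euclid]

theorem euclid_zero_left {q : ℕ} (hq : 0 < q) : euclid a b s t 0 q = t := by
  obtain ⟨q, rfl⟩ : ∃ r, q = r + 1 := ⟨q - 1, by omega⟩
  simp [euclid]

theorem euclid_add_left (has : a s = s) (p q : ℕ) :
    euclid a b s t (p + q) q = a (euclid a b s t p q) := by
  rcases q with _ | q
  · simp [euclid_zero_right, has]
  · rw [← add_assoc, euclid, if_pos (by omega), Nat.add_sub_cancel]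

theorem euclid_add_right (hbt : b t = t) (hab : a t = b s) {p q : ℕ} (h : 0 < p ∨ 0 < q) :
    euclid a b s t p (p + q) = b (euclid a b s t p q) := by
  rcases p with _ | p
  · rw [Nat.zero_add, euclid_zero_left (by omega), hbt]
  · rcases q with _ | q
    · rw [add_zero, euclid_zero_right, euclid, if_pos le_rfl, Nat.sub_self,
        euclid_zero_left (by omega), hab]
    · rw [← add_assoc, euclid, if_neg (by omega)]
      congr 2
      omega

theorem euclid_induction {P : ℕ → ℕ → Prop} (h1 : ∀ p, 0 < p → P p 0) (h2 : ∀ q, 0 < q → P 0 q)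
    (hl : ∀ p q, (0 < p ∨ 0 < q) → P p q → P (p + q) q)
    (hr : ∀ p q, (0 < p ∨ 0 < q) → P p q → P p (p + q)) :
    ∀ p q, (0 < p ∨ 0 < q) → P p q := by
  intro p q
  induction hn : p + q using Nat.strong_induction_on generalizing p q with
  | _ n ih =>
    intro h
    rcases Nat.eq_zero_or_pos q with rfl | hq
    · exact h1 p (by omega)
    rcases Nat.eq_zero_or_pos p with rfl | hp
    · exact h2 q hq
    rcases le_total q p with hle | hle
    · have := hl (p - q) q (by omega) (ih _ (by omega) (p - q) q rfl (by omega))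
      rwa [Nat.sub_add_cancel hle] at this
    · have := hr p (q - p) (by omega) (ih _ (by omega) p (q - p) rfl (by omega))
      rwa [Nat.add_sub_cancel' hle] at this

end Euclid

section Orbit

variable {S : Type*} [MulAction B3 S]

theorem braid_rel : B3.sig1 * B3.sig2 * B3.sig1 = B3.sig2 * B3.sig1 * B3.sig2 := by
  have h : (PresentedGroup.mk braidRels3)
      (FreeGroup.of 0 * FreeGroup.of 1 * FreeGroup.of 0 *
        (FreeGroup.of 1 * FreeGroup.of 0 * FreeGroup.of 1)⁻¹) = 1 :=
    (PresentedGroup.one_of_mem (Set.mem_singleton _))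
  rw [map_mul, map_inv, mul_inv_eq_one] at h
  exact h

/-- The value of `slopeMap` at the vector `(p, q)`, `p, q ≥ 0`. -/
def quadPos (t1 t2 : S) : ℕ → ℕ → S :=
  euclid (B3.sig1 • ·) (B3.sig2⁻¹ • ·) t1 t2

/-- The value of `slopeMap` at the vector `(p, -q)`, `p, q ≥ 0`. -/
def quadNeg (t1 t2 : S) : ℕ → ℕ → S :=
  euclid (B3.sig1⁻¹ • ·) (B3.sig2 • ·) t1 t2

/-- A map `ℤ² → S`, even in the vector, sending `(1, 0)` to `t1` and `(0, 1)` to `t2`. For a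
`SlopePair` it is `B3`-equivariant on nonzero vectors. Its value at `0` is irrelevant. -/
def slopeMap (t1 t2 : S) (x : ℤ × ℤ) : S :=
  if 0 ≤ x.1 * x.2 then quadPos t1 t2 x.1.natAbs x.2.natAbs
  else quadNeg t1 t2 x.1.natAbs x.2.natAbs

/-- Points `t1`, `t2` of a `B3`-set that `B3` moves as the defining relations of `SB3` make it move
`τ₁`, `τ₂` under conjugation. -/
structure SlopePair (t1 t2 : S) : Prop where
  fix1 : B3.sig1 • t1 = t1
  fix2 : B3.sig2 • t2 = t2
  move1 : B3.sig1 • B3.sig2 • t1 = t2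
  move2 : B3.sig2 • B3.sig1 • t2 = t1

namespace SlopePair

variable {t1 t2 : S}

/-- Here and below `σ₁σ₂σ₁` is the half twist, conjugation by which exchanges `σ₁` and `σ₂`. -/
theorem delta_smul1 (x : S) : (B3.sig1 * B3.sig2 * B3.sig1) • B3.sig1 • x
    = B3.sig2 • (B3.sig1 * B3.sig2 * B3.sig1) • x := by
  simp only [smul_smul]
  congr 1
  conv_lhs => rw [braid_rel]
  simp only [mul_assoc]

theorem delta_smul2 (x : S) : (B3.sig1 * B3.sig2 * B3.sig1) • B3.sig2 • x
    = B3.sig1 • (B3.sig1 * B3.sig2 * B3.sig1) • x := by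
  simp only [smul_smul]
  congr 1
  conv_rhs => rw [braid_rel]
  simp only [mul_assoc]

theorem delta_smul1_inv (x : S) : (B3.sig1 * B3.sig2 * B3.sig1) • B3.sig1⁻¹ • x
    = B3.sig2⁻¹ • (B3.sig1 * B3.sig2 * B3.sig1) • x := by
  rw [eq_inv_smul_iff, ← delta_smul1, smul_inv_smul]

theorem delta_smul2_inv (x : S) : (B3.sig1 * B3.sig2 * B3.sig1) • B3.sig2⁻¹ • x
    = B3.sig1⁻¹ • (B3.sig1 * B3.sig2 * B3.sig1) • x := by
  rw [eq_inv_smul_iff, ← delta_smul2, smul_inv_smul]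

theorem delta_t1 (H : SlopePair t1 t2) : (B3.sig1 * B3.sig2 * B3.sig1) • t1 = t2 := by
  rw [mul_smul, mul_smul, H.fix1, H.move1]

theorem delta_t2 (H : SlopePair t1 t2) : (B3.sig1 * B3.sig2 * B3.sig1) • t2 = t1 := by
  rw [braid_rel, mul_smul, mul_smul, H.fix2, H.move2]

theorem pos_left (H : SlopePair t1 t2) (p q : ℕ) : quadPos t1 t2 (p + q) q = B3.sig1 • quadPos t1 t2 p q :=
  euclid_add_left H.fix1 p q

theorem neg_left (H : SlopePair t1 t2) (p q : ℕ) : quadNeg t1 t2 (p + q) q = B3.sig1⁻¹ • quadNeg t1 t2 p q :=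
  euclid_add_left (inv_smul_eq_iff.2 H.fix1.symm) p q

theorem pos_right (H : SlopePair t1 t2) {p q : ℕ} (h : 0 < p ∨ 0 < q) :
    quadPos t1 t2 p (p + q) = B3.sig2⁻¹ • quadPos t1 t2 p q :=
  euclid_add_right (inv_smul_eq_iff.2 H.fix2.symm)
    (show B3.sig1 • t2 = B3.sig2⁻¹ • t1 by rw [eq_inv_smul_iff, H.move2]) h

theorem neg_right (H : SlopePair t1 t2) {p q : ℕ} (h : 0 < p ∨ 0 < q) :
    quadNeg t1 t2 p (p + q) = B3.sig2 • quadNeg t1 t2 p q :=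
  euclid_add_right H.fix2
    (show B3.sig1⁻¹ • t2 = B3.sig2 • t1 by rw [inv_smul_eq_iff, H.move1]) h

/-- Together with `delta_pos`, equivariance of `slopeMap` under the half twist, which acts on `ℤ²` by
a rotation of order four and so exchanges the two pairs of opposite quadrants. -/
theorem delta_neg (H : SlopePair t1 t2) : ∀ p q, (0 < p ∨ 0 < q) →
    (B3.sig1 * B3.sig2 * B3.sig1) • quadNeg t1 t2 p q = quadPos t1 t2 q p := by
  apply euclid_induction
  · intro p hp
    rw [quadNeg, quadPos, euclid_zero_right, euclid_zero_left hp, H.delta_t1]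
  · intro q hq
    rw [quadNeg, quadPos, euclid_zero_right, euclid_zero_left hq, H.delta_t2]
  · intro p q h ih
    rw [H.neg_left, add_comm, H.pos_right h.symm, ← ih, delta_smul1_inv]
  · intro p q h ih
    rw [H.neg_right h, add_comm, H.pos_left, ← ih, delta_smul2]

theorem delta_pos (H : SlopePair t1 t2) : ∀ p q, (0 < p ∨ 0 < q) →
    (B3.sig1 * B3.sig2 * B3.sig1) • quadPos t1 t2 p q = quadNeg t1 t2 q p := by
  apply euclid_induction
  · intro p hp
    rw [quadNeg, quadPos, euclid_zero_right, euclid_zero_left hp, H.delta_t1]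
  · intro q hq
    rw [quadNeg, quadPos, euclid_zero_right, euclid_zero_left hq, H.delta_t2]
  · intro p q h ih
    rw [H.pos_left, add_comm, H.neg_right h.symm, ← ih, delta_smul1]
  · intro p q h ih
    rw [H.pos_right h, add_comm, H.neg_left, ← ih, delta_smul2_inv]

theorem slopeMap_pos (p q : ℕ) : slopeMap t1 t2 (p, q) = quadPos t1 t2 p q := by
  rw [slopeMap, if_pos (by positivity)]
  simp

theorem slopeMap_neg (p q : ℕ) : slopeMap t1 t2 (p, -q) = quadNeg t1 t2 p q := by
  rcases Nat.eq_zero_or_pos p with rfl | hp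
  · rw [slopeMap, if_pos (by simp)]
    rcases Nat.eq_zero_or_pos q with rfl | hq
    · simp [quadPos, quadNeg, euclid_zero_right]
    · simp [quadPos, quadNeg, euclid_zero_left hq]
  · rcases Nat.eq_zero_or_pos q with rfl | hq
    · simp [slopeMap, quadPos, quadNeg, euclid_zero_right]
    · rw [slopeMap, if_neg]
      · simp
      · have : (0 : ℤ) < p * q := by positivity
        simp only [not_le]
        linarith

theorem slopeMap_even (x : ℤ × ℤ) : slopeMap t1 t2 (-x) = slopeMap t1 t2 x := by
  simp [slopeMap]

/-- Up to sign every nonzero vector is `(p, q)` or `(p, -q)` with `p, q ≥ 0`. -/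
theorem quadrant_cases {P : ℤ × ℤ → Prop} (heven : ∀ x, P (-x) → P x)
    (hpos : ∀ p q : ℕ, (0 < p ∨ 0 < q) → P (p, q))
    (hneg : ∀ p q : ℕ, (0 < p ∨ 0 < q) → P (p, -q)) : ∀ x, x ≠ 0 → P x := by
  rintro ⟨x, y⟩ hx
  have hx' : x ≠ 0 ∨ y ≠ 0 := by
    by_contra! h
    exact hx (by ext <;> simp [h])
  rcases le_total 0 x with h1 | h1 <;> rcases le_total 0 y with h2 | h2
  · have := hpos x.natAbs y.natAbs (by omega)
    rwa [Int.natAbs_of_nonneg h1, Int.natAbs_of_nonneg h2] at this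
  · have := hneg x.natAbs y.natAbs (by omega)
    rwa [Int.natAbs_of_nonneg h1, Int.ofNat_natAbs_of_nonpos h2, neg_neg] at this
  · have := hneg x.natAbs y.natAbs (by omega)
    rw [Int.natAbs_of_nonneg h2, Int.ofNat_natAbs_of_nonpos h1] at this
    exact heven _ this
  · have := hpos x.natAbs y.natAbs (by omega)
    rw [Int.ofNat_natAbs_of_nonpos h1, Int.ofNat_natAbs_of_nonpos h2] at this
    exact heven _ this

theorem slopeMap_sig1 (H : SlopePair t1 t2) : ∀ x : ℤ × ℤ, x ≠ 0 →
    slopeMap t1 t2 (rho B3.sig1 x) = B3.sig1 • slopeMap t1 t2 x := by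
  apply quadrant_cases
  · intro x hx
    rwa [map_neg, slopeMap_even, slopeMap_even] at hx
  · intro p q _
    rw [rho_sig1, slopeMap_pos, ← H.pos_left, ← slopeMap_pos]
    simp
  · intro p q h
    rw [rho_sig1, slopeMap_neg]
    rcases le_total q p with hle | hlt
    · obtain ⟨r, rfl⟩ := Nat.exists_eq_add_of_le' hle
      rw [H.neg_left, smul_inv_smul, ← slopeMap_neg]
      simp
    · obtain ⟨r, rfl⟩ := Nat.exists_eq_add_of_le hlt
      have h' : 0 < p ∨ 0 < r := by omega
      rw [H.neg_right h', ← slopeMap_even]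
      have e : (-((p : ℤ) + -((p + r : ℕ) : ℤ), -((p + r : ℕ) : ℤ)) : ℤ × ℤ)
          = ((r : ℤ), ((r + p : ℕ) : ℤ)) := by
        ext <;> simp; ring
      rw [e, slopeMap_pos, H.pos_right h'.symm, ← H.delta_neg _ _ h', inv_smul_eq_iff, braid_rel]
      simp only [mul_smul]

theorem slopeMap_sig2 (H : SlopePair t1 t2) : ∀ x : ℤ × ℤ, x ≠ 0 →
    slopeMap t1 t2 (rho B3.sig2 x) = B3.sig2 • slopeMap t1 t2 x := by
  apply quadrant_cases
  · intro x hx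
    rwa [map_neg, slopeMap_even, slopeMap_even] at hx
  · intro p q h
    rw [rho_sig2, slopeMap_pos]
    rcases le_total p q with hle | hlt
    · obtain ⟨r, rfl⟩ := Nat.exists_eq_add_of_le hle
      rw [H.pos_right (by omega), smul_inv_smul, ← slopeMap_pos]
      simp
    · obtain ⟨r, rfl⟩ := Nat.exists_eq_add_of_le' hlt
      have h' : 0 < r ∨ 0 < q := by omega
      have e : ((((r + q : ℕ) : ℤ), (q : ℤ) - ((r + q : ℕ) : ℤ)) : ℤ × ℤ)
          = (((q + r : ℕ) : ℤ), -(r : ℤ)) := by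
        ext <;> simp; ring
      rw [H.pos_left, e, slopeMap_neg, H.neg_left, ← H.delta_pos _ _ h', inv_smul_eq_iff]
      simp only [mul_smul]
  · intro p q h
    rw [rho_sig2, slopeMap_neg, ← H.neg_right h, ← slopeMap_neg]
    congr 2
    push_cast
    ring

theorem slopeMap_rho (H : SlopePair t1 t2) (g : B3) : ∀ x : ℤ × ℤ, x ≠ 0 →
    slopeMap t1 t2 (rho g x) = g • slopeMap t1 t2 x := by
  induction g using B3_induction with
  | h1 => exact H.slopeMap_sig1
  | h2 => exact H.slopeMap_sig2
  | hone => intro x _; rw [map_one, one_smul]; rfl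
  | hmul g h hg hh => intro x hx; rw [rho_mul, hg _ (rho_ne_zero h hx), hh x hx, mul_smul]
  | hinv g hg => intro x hx; rw [eq_inv_smul_iff, ← hg _ (rho_ne_zero _ hx), rho_self_inv]

theorem smul_t1 (H : SlopePair t1 t2) (g : B3) : g • t1 = slopeMap t1 t2 (rho g (1, 0)) := by
  rw [H.slopeMap_rho g (1, 0) (by simp)]
  simp [slopeMap, quadPos, euclid_zero_right]

/-- The point `g • t1` depends only on the line spanned by `rho g (1, 0)`; the hypothesis says that
`g` and `h` give the same line. -/
theorem smul_eq_of_snd_eq_zero (H : SlopePair t1 t2) {g h : B3} (hgh : (rho (g⁻¹ * h) (1, 0)).2 = 0) :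
    g • t1 = h • t1 := by
  have : (g⁻¹ * h) • t1 = t1 := by
    rw [H.smul_t1]
    rcases rho_e1_eq_of_area _ hgh with h | h <;> rw [h] <;>
      simp [slopeMap, quadPos, euclid_zero_right]
  rw [mul_smul, inv_smul_eq_iff] at this
  exact this.symm

end SlopePair

end Orbit

/-! ### Factorizations in the singular braid monoid -/

theorem SB3_rel {a b : FreeMonoid SB3Gen} (h : SB3Rel a b) :
    PresentedMonoid.mk SB3Rel a = PresentedMonoid.mk SB3Rel b :=
  PresentedMonoid.mk_eq_mk_of_rel h

/-- `σ₁` as a unit of `SB3`. -/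
def sUnit1 : SB3ˣ where
  inv_val := SB3_rel .inv_s1'
  val := SB3.g .s1
  inv := SB3.g .sb1
  val_inv := SB3_rel .inv_s1

/-- `σ₂` as a unit of `SB3`. -/
def sUnit2 : SB3ˣ where
  inv_val := SB3_rel .inv_s2'
  val := SB3.g .s2
  inv := SB3.g .sb2
  val_inv := SB3_rel .inv_s2

/-- The canonical homomorphism from the braid group to the units of `SB3`. -/
def inclU : B3 →* SB3ˣ :=
  PresentedGroup.toGroup (rels := braidRels3) (f := ![sUnit1, sUnit2]) (by
    rintro r rfl
    rw [map_mul, map_inv, mul_inv_eq_one]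
    simp only [map_mul, FreeGroup.lift_apply_of]
    exact Units.ext (SB3_rel .braid))

theorem inclU_sig1 : inclU B3.sig1 = sUnit1 := by simp [inclU]

theorem inclU_sig2 : inclU B3.sig2 = sUnit2 := by simp [inclU]

/-- The braid group acts on `SB3` by conjugation. -/
instance conjAction : MulAction B3 SB3 where
  smul g x := inclU g * x * (inclU g)⁻¹.1
  one_smul x := by
    change (inclU 1).1 * x * (inclU 1)⁻¹.1 = x
    simp
  mul_smul g h x := by
    change (inclU (g * h)).1 * x * (inclU (g * h))⁻¹.1
      = (inclU g).1 * ((inclU h).1 * x * (inclU h)⁻¹.1) * (inclU g)⁻¹.1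
    simp [mul_assoc]

theorem conj_def (g : B3) (x : SB3) : g • x = (inclU g).1 * x * (inclU g)⁻¹.1 := rfl

theorem incl_mul (g : B3) (x : SB3) : (inclU g).1 * x = (g • x) * (inclU g).1 := by
  simp [conj_def]

theorem conj_eq_of_comm {g : B3} {x y : SB3} (h : (inclU g).1 * x = y * (inclU g).1) :
    g • x = y := by
  rw [conj_def, h, Units.mul_inv_cancel_right]

theorem smul_tau1 : (B3.sig1 * B3.sig2) • SB3.g .t1 = SB3.g .t2 := by
  apply conj_eq_of_comm
  rw [map_mul, inclU_sig1, inclU_sig2]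
  change _ = PresentedMonoid.of SB3Rel _ *
    (PresentedMonoid.of SB3Rel _ * PresentedMonoid.of SB3Rel _)
  rw [← mul_assoc]
  exact (SB3_rel .tau_s).symm

theorem slopePair_tau : SlopePair (SB3.g .t1) (SB3.g .t2) where
  fix1 := conj_eq_of_comm (by rw [inclU_sig1]; exact SB3_rel .comm1)
  fix2 := conj_eq_of_comm (by rw [inclU_sig2]; exact SB3_rel .comm2)
  move1 := by rw [smul_smul, smul_tau1]
  move2 := by
    rw [smul_smul]
    apply conj_eq_of_comm
    rw [map_mul, inclU_sig1, inclU_sig2]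
    change _ = PresentedMonoid.of SB3Rel _ *
      (PresentedMonoid.of SB3Rel _ * PresentedMonoid.of SB3Rel _)
    rw [← mul_assoc]
    exact SB3_rel .s_tau

/-- The singular braid `(g₁ τ₁ g₁⁻¹) ⋯ (gₙ τ₁ gₙ⁻¹) k` for `L = [g₁, …, gₙ]`. -/
def singWord (L : List B3) (k : B3) : SB3 :=
  (L.map fun g => g • SB3.g .t1).prod * (inclU k).1

theorem incl_mul_singWord (g : B3) (L : List B3) (k : B3) :
    (inclU g).1 * singWord L k = singWord (L.map (g * ·)) (g * k) := by
  induction L with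
  | nil => simp [singWord]
  | cons h L ih =>
    simp only [singWord, List.map_cons, List.prod_cons] at ih ⊢
    rw [mul_assoc, ← mul_assoc (inclU g).1, incl_mul, mul_assoc, ih, smul_smul, mul_assoc]

theorem tau_mul_singWord (g : B3) (L : List B3) (k : B3) :
    (g • SB3.g .t1) * singWord L k = singWord (g :: L) k := by
  simp [singWord, mul_assoc]

theorem exists_singWord (x : SB3) : ∃ L k, x = singWord L k := by
  induction x using PresentedMonoid.inductionOn with
  | h w =>
    induction w using FreeMonoid.recOn with
    | one => exact ⟨[], 1, by simp [singWord]⟩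
    | of_mul a w ih =>
      obtain ⟨L, k, h⟩ := ih
      rw [map_mul, h]
      have hsig : ∀ g : B3, ∃ L' k', (inclU g).1 * singWord L k = singWord L' k' :=
        fun g => ⟨_, _, incl_mul_singWord g L k⟩
      have htau : ∀ g : B3, ∃ L' k', (g • SB3.g .t1) * singWord L k = singWord L' k' :=
        fun g => ⟨_, _, tau_mul_singWord g L k⟩
      cases a with
      | s1 => have := hsig B3.sig1; simp only [inclU_sig1] at this; exact this
      | s2 => have := hsig B3.sig2; simp only [inclU_sig2] at this; exact this
      | sb1 => have := hsig B3.sig1⁻¹; simp only [map_inv, inclU_sig1] at this; exact this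
      | sb2 => have := hsig B3.sig2⁻¹; simp only [map_inv, inclU_sig2] at this; exact this
      | t1 => have := htau 1; simp only [one_smul] at this; exact this
      | t2 => have := htau (B3.sig1 * B3.sig2); simp only [smul_tau1] at this; exact this

/-! ### The images of the singular generators in the group ring -/

/-- `g (σ₁ - σ₁⁻¹) g⁻¹`, the image of `g τ₁ g⁻¹` under the Birman homomorphism. -/
noncomputable def skein (g : B3) : MonoidAlgebra ℤ B3 :=
  MonoidAlgebra.of ℤ B3 (g * B3.sig1 * g⁻¹) - MonoidAlgebra.of ℤ B3 (g * B3.sig1⁻¹ * g⁻¹)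

theorem of_mul_skein (g h : B3) :
    MonoidAlgebra.of ℤ B3 g * skein h = skein (g * h) * MonoidAlgebra.of ℤ B3 g := by
  simp only [skein, mul_sub, sub_mul, ← map_mul]
  congr 2 <;> group

theorem skein_eq (h : B3) : skein h = (MonoidAlgebra.of ℤ B3 (h * (B3.sig1 * B3.sig1) * h⁻¹) - 1) *
    MonoidAlgebra.of ℤ B3 (h * B3.sig1⁻¹ * h⁻¹) := by
  rw [skein, sub_mul, one_mul, ← map_mul]
  congr 2
  group

theorem of_mul_eq_zero {g : B3} {u : MonoidAlgebra ℤ B3} (h : MonoidAlgebra.of ℤ B3 g * u = 0) :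
    u = 0 := by
  have := congrArg (MonoidAlgebra.of ℤ B3 g⁻¹ * ·) h
  simpa only [← mul_assoc, ← map_mul, inv_mul_cancel, map_one, one_mul, mul_zero] using this

/-- The right ideals generated by `skein g` and `skein h` intersect trivially when `g` and `h` move
`(1, 0)` to different lines. Conjugation by `g` reduces to `g = 1`. -/
theorem skein_kill {g h : B3} (hgh : (rho (g⁻¹ * h) (1, 0)).2 ≠ 0) {u v : MonoidAlgebra ℤ B3}
    (huv : skein g * u = skein h * v) : u = 0 := by
  have e := congrArg (MonoidAlgebra.of ℤ B3 g⁻¹ * ·) huv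
  simp only [← mul_assoc, of_mul_skein, inv_mul_cancel] at e
  rw [skein_eq 1, skein_eq (g⁻¹ * h)] at e
  simp only [mul_assoc _ _ u, mul_assoc _ _ v] at e
  rw [mul_assoc _ _ (_ * u), mul_assoc _ _ (_ * v), one_mul, inv_one, mul_one] at e
  exact of_mul_eq_zero (of_mul_eq_zero (group_kill _ _ (free_pair _ hgh) _ _ e))

theorem skein_regular (g : B3) {u : MonoidAlgebra ℤ B3} (h : skein g * u = 0) : u = 0 :=
  skein_kill (g := g) (h := g * B3.sig2) (v := 0) (by simp [rho_sig2]) (by simpa using h)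

/-! ### Injectivity -/

section Birman

variable {η : SB3 →* MonoidAlgebra ℤ B3}

theorem eta_incl (hη : IsBirman η) (g : B3) : η (inclU g).1 = MonoidAlgebra.of ℤ B3 g := by
  induction g using B3_induction with
  | h1 => rw [inclU_sig1]; exact hη.1
  | h2 => rw [inclU_sig2]; exact hη.2.1
  | hone => rw [map_one, Units.val_one, map_one, map_one]
  | hmul g h hg hh => rw [map_mul, Units.val_mul, map_mul, hg, hh, map_mul]
  | hinv g hg =>
    have h1 : η (inclU g⁻¹).1 * MonoidAlgebra.of ℤ B3 g = 1 := by
      rw [← hg, ← map_mul, ← Units.val_mul, ← map_mul, inv_mul_cancel, map_one, Units.val_one,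
        map_one]
    have h2 : MonoidAlgebra.of ℤ B3 g * MonoidAlgebra.of ℤ B3 g⁻¹ = 1 := by
      rw [← map_mul, mul_inv_cancel, map_one]
    exact left_inv_eq_right_inv h1 h2

theorem eta_conj_tau (hη : IsBirman η) (g : B3) : η (g • SB3.g .t1) = skein g := by
  rw [conj_def, ← map_inv, map_mul, map_mul, eta_incl hη, eta_incl hη, hη.2.2.2.2.1, skein]
  simp only [mul_sub, sub_mul, ← map_mul]

theorem eta_singWord_cons (hη : IsBirman η) (g : B3) (L : List B3) (k : B3) :
    η (singWord (g :: L) k) = skein g * η (singWord L k) := by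
  rw [← tau_mul_singWord, map_mul, eta_conj_tau hη]

theorem eta_singWord_nil (hη : IsBirman η) (k : B3) :
    η (singWord [] k) = MonoidAlgebra.of ℤ B3 k := by
  simp only [singWord, List.map_nil, List.prod_nil, one_mul, eta_incl hη]

theorem eta_singWord_ne_zero (hη : IsBirman η) (L : List B3) (k : B3) :
    η (singWord L k) ≠ 0 := by
  induction L with
  | nil =>
    rw [eta_singWord_nil hη]
    intro h
    have := of_mul_eq_zero (g := k) (u := 1) (by rw [mul_one, h])
    exact one_ne_zero this
  | cons g L ih =>
    rw [eta_singWord_cons hη]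
    exact fun h => ih (skein_regular g h)

/-- The augmentation of `skein g` is zero. -/
theorem of_ne_skein_mul (k g : B3) (u : MonoidAlgebra ℤ B3) :
    MonoidAlgebra.of ℤ B3 k ≠ skein g * u := by
  intro h
  have := congrArg (MonoidAlgebra.lift ℤ ℤ B3 1) h
  simp [skein] at this

theorem eta_singWord_inj (hη : IsBirman η) : ∀ (L L' : List B3) (k k' : B3),
    η (singWord L k) = η (singWord L' k') → singWord L k = singWord L' k' := by
  intro L
  induction L with
  | nil =>
    intro L' k k' h
    cases L' with
    | nil =>
      rw [eta_singWord_nil hη, eta_singWord_nil hη] at h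
      rw [MonoidAlgebra.of_injective h]
    | cons g' L' =>
      rw [eta_singWord_nil hη, eta_singWord_cons hη] at h
      exact absurd h (of_ne_skein_mul _ _ _)
  | cons g L ih =>
    intro L' k k' h
    cases L' with
    | nil =>
      rw [eta_singWord_nil hη, eta_singWord_cons hη] at h
      exact absurd h.symm (of_ne_skein_mul _ _ _)
    | cons g' L' =>
      by_cases hgg : (rho (g⁻¹ * g') (1, 0)).2 = 0
      · have htau := slopePair_tau.smul_eq_of_snd_eq_zero hgg
        have hsk : skein g = skein g' := by rw [← eta_conj_tau hη, htau, eta_conj_tau hη]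
        rw [eta_singWord_cons hη, eta_singWord_cons hη, ← hsk, ← sub_eq_zero, ← mul_sub] at h
        rw [← tau_mul_singWord, ← tau_mul_singWord, htau,
          ih _ _ _ (sub_eq_zero.1 (skein_regular g h))]
      · rw [eta_singWord_cons hη, eta_singWord_cons hη] at h
        exact absurd (skein_kill hgg h) (eta_singWord_ne_zero hη L k)

end Birman

/-- Birman's conjecture for n = 3: the Birman homomorphism
`η : SB3 → ℤB3` is injective. -/
theorem birman_injective (η : SB3 →* MonoidAlgebra ℤ B3) (hη : IsBirman η) :
    Function.Injective η := by
  intro x y hxy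
  obtain ⟨L, k, rfl⟩ := exists_singWord x
  obtain ⟨L', k', rfl⟩ := exists_singWord y
  exact eta_singWord_inj hη L L' k k' hxy
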